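/- Let n ≥ 1 be a natural number and set β_{1,n} = (8πn(n+1)/T) · cot(nπ/(2(n+1))). Then for every ε > 0 there exists a ∈ Λ_n such that ∫_0^T |a(x) − λ_{2n−1}| dx < β_{1,n} + ε. Consequently inf_{a ∈ Λ_n} ‖a − λ_{2n−1}‖_{L¹(0,T)} = β_{1,n}. -/

import Mathlib

open MeasureTheory Set Real

/-- `u` is a solution of `u'' + a·u = 0` on `[c,d]`, with derivative function `v`. -/
def IsSolOn (a u v : ℝ → ℝ) (c d : ℝ) : Prop :=
  (∀ x ∈ Set.Icc c d, HasDerivWithinAt u (v x) (Set.Icc c d) x) ∧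
  (∀ x ∈ Set.Icc c d, v x = v c - ∫ t in c..x, a t * u t)

/-- Membership in `L_T`: measurable, `T`-periodic and integrable on `[0,T]`. -/
def MemLT (T : ℝ) (a : ℝ → ℝ) : Prop :=
  Measurable a ∧ (∀ x, a (x + T) = a x) ∧ IntegrableOn a (Set.Icc 0 T)

/-- `c ≺ d` : `c ≤ d` a.e. on `[0,T]` and `c < d` on a set of positive measure. -/
def Prec (T : ℝ) (c d : ℝ → ℝ) : Prop :=
  (∀ᵐ x ∂(volume.restrict (Set.Icc 0 T)), c x ≤ d x) ∧
  0 < volume {x ∈ Set.Icc 0 T | c x < d x}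

/-- `(u,v)` solves the periodic problem `u'' + a u = 0`, `u(0)=u(T)`, `u'(0)=u'(T)`. -/
def PeriodicSol (T : ℝ) (a u v : ℝ → ℝ) : Prop :=
  IsSolOn a u v 0 T ∧ u 0 = u T ∧ v 0 = v T

/-- `(u,v)` solves the antiperiodic problem `u'' + a u = 0`, `u(0)+u(T)=0`, `u'(0)+u'(T)=0`. -/
def AntiperiodicSol (T : ℝ) (a u v : ℝ → ℝ) : Prop :=
  IsSolOn a u v 0 T ∧ u 0 + u T = 0 ∧ v 0 + v T = 0

/-- The `(2n-1)`-st periodic eigenvalue `λ_{2n-1} = 4 n² π² / T²`. -/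
noncomputable def lam (T : ℝ) (n : ℕ) : ℝ := 4 * (n : ℝ) ^ 2 * Real.pi ^ 2 / T ^ 2

/-- The `(2n-1)`-st antiperiodic eigenvalue `λ̃_{2n-1} = (2n-1)² π² / T²`. -/
noncomputable def lamT (T : ℝ) (n : ℕ) : ℝ := (2 * (n : ℝ) - 1) ^ 2 * Real.pi ^ 2 / T ^ 2

/-- The set `Λ_n`. -/
def LambdaN (T : ℝ) (n : ℕ) : Set (ℝ → ℝ) :=
  {a | MemLT T a ∧ Prec T (fun _ => lam T n) a ∧
    ∃ u v : ℝ → ℝ, PeriodicSol T a u v ∧ ∃ x ∈ Set.Icc 0 T, u x ≠ 0}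

/-- The set `Λ̃_n`. -/
def LambdaTildeN (T : ℝ) (n : ℕ) : Set (ℝ → ℝ) :=
  {a | MemLT T a ∧ Prec T (fun _ => lamT T n) a ∧
    ∃ u v : ℝ → ℝ, AntiperiodicSol T a u v ∧ ∃ x ∈ Set.Icc 0 T, u x ≠ 0}

/-- The constant `β_{1,n}` of the periodic `L¹` Lyapunov inequality. -/
noncomputable def beta1 (T : ℝ) (n : ℕ) : ℝ :=
  8 * Real.pi * (n : ℝ) * ((n : ℝ) + 1) / T * Real.cot ((n : ℝ) * Real.pi / (2 * ((n : ℝ) + 1)))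

/-- The constant `β̃_{1,n}` of the antiperiodic `L¹` Lyapunov inequality. -/
noncomputable def betaT1 (T : ℝ) (n : ℕ) : ℝ :=
  2 * Real.pi * (2 * (n : ℝ) - 1) * (2 * (n : ℝ) + 1) / T *
    Real.cot ((2 * (n : ℝ) - 1) * Real.pi / (2 * (2 * (n : ℝ) + 1)))


/-- `f` is absolutely continuous on the interval with given a.e. derivative. -/
def ACd (f f' : ℝ → ℝ) (a b : ℝ) : Prop :=
  AbsolutelyContinuousOnInterval f a b ∧ ∀ᵐ x, x ∈ Set.uIcc a b → HasDerivAt f (f' x) x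

theorem ACd.congr_deriv {f f' g' : ℝ → ℝ} {a b : ℝ} (hf : ACd f f' a b)
    (h : ∀ᵐ x, x ∈ Set.uIcc a b → f' x = g' x) : ACd f g' a b := by
  refine ⟨hf.1, ?_⟩
  filter_upwards [hf.2, h] with x h1 h2 hx
  rw [← h2 hx]; exact h1 hx

theorem ACd.mono {f f' : ℝ → ℝ} {a b c d : ℝ} (hf : ACd f f' a b)
    (h : Set.uIcc c d ⊆ Set.uIcc a b) : ACd f f' c d := by
  refine ⟨hf.1.mono h, ?_⟩
  filter_upwards [hf.2] with x h1 hx using h1 (h hx)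

theorem ACd.continuousOn {f f' : ℝ → ℝ} {a b : ℝ} (hf : ACd f f' a b) :
    ContinuousOn f (Set.uIcc a b) := hf.1.continuousOn

theorem ACd.ftc {f f' : ℝ → ℝ} {a b : ℝ} (hf : ACd f f' a b) :
    ∫ x in a..b, f' x = f b - f a := by
  rw [← hf.1.integral_deriv_eq_sub]
  apply intervalIntegral.integral_congr_ae
  filter_upwards [hf.2] with x h1 hx
  exact (h1 (Set.uIoc_subset_uIcc hx)).deriv.symm

theorem ACd.intervalIntegrable {f f' : ℝ → ℝ} {a b : ℝ} (hf : ACd f f' a b) :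
    IntervalIntegrable f' volume a b := by
  refine hf.1.intervalIntegrable_deriv.congr_ae ?_
  rw [Filter.EventuallyEq, ae_restrict_iff' measurableSet_uIoc]
  filter_upwards [hf.2] with x h1 hx
  exact (h1 (Set.uIoc_subset_uIcc hx)).deriv

theorem ACd.add {f f' g g' : ℝ → ℝ} {a b : ℝ} (hf : ACd f f' a b) (hg : ACd g g' a b) :
    ACd (fun x => f x + g x) (fun x => f' x + g' x) a b := by
  refine ⟨hf.1.fun_add hg.1, ?_⟩
  filter_upwards [hf.2, hg.2] with x h1 h2 hx
  exact (h1 hx).add (h2 hx)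

theorem ACd.sub {f f' g g' : ℝ → ℝ} {a b : ℝ} (hf : ACd f f' a b) (hg : ACd g g' a b) :
    ACd (fun x => f x - g x) (fun x => f' x - g' x) a b := by
  refine ⟨hf.1.fun_sub hg.1, ?_⟩
  filter_upwards [hf.2, hg.2] with x h1 h2 hx
  exact (h1 hx).sub (h2 hx)

theorem ACd.mul {f f' g g' : ℝ → ℝ} {a b : ℝ} (hf : ACd f f' a b) (hg : ACd g g' a b) :
    ACd (fun x => f x * g x) (fun x => f' x * g x + f x * g' x) a b := by
  refine ⟨hf.1.fun_mul hg.1, ?_⟩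
  filter_upwards [hf.2, hg.2] with x h1 h2 hx
  exact (h1 hx).mul (h2 hx)

theorem ACd.integral {f : ℝ → ℝ} {a b : ℝ} (hf : IntervalIntegrable f volume a b) :
    ACd (fun x => ∫ t in a..x, f t) f a b := by
  refine ⟨hf.absolutelyContinuousOnInterval_intervalIntegral (by simp), ?_⟩
  filter_upwards [hf.ae_hasDerivAt_integral] with x h1 hx
  exact h1 hx a (by simp)

theorem ACd.const (c a b : ℝ) : ACd (fun _ => c) (fun _ => 0) a b := by
  refine ⟨?_, ?_⟩
  · exact (contDiff_const.contDiffOn).absolutelyContinuousOnInterval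
  · filter_upwards with x _ using hasDerivAt_const _ _

theorem ACd.const_mul {f f' : ℝ → ℝ} {a b : ℝ} (c : ℝ) (hf : ACd f f' a b) :
    ACd (fun x => c * f x) (fun x => c * f' x) a b := by
  refine ⟨hf.1.const_mul c, ?_⟩
  filter_upwards [hf.2] with x h1 hx using (h1 hx).const_mul c

theorem ACd.comp {f f' : ℝ → ℝ} {a b : ℝ} {F F' : ℝ → ℝ} (hF : ∀ y, HasDerivAt F (F' y) y)
    (hF' : Continuous F') (hf : ACd f f' a b) :
    ACd (fun x => F (f x)) (fun x => F' (f x) * f' x) a b := by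
  refine ⟨?_, ?_⟩
  · have hc : ContDiff ℝ 1 F := by
      rw [contDiff_one_iff_deriv]
      refine ⟨fun y => (hF y).differentiableAt, ?_⟩
      have : deriv F = F' := funext fun y => (hF y).deriv
      rwa [this]
    obtain ⟨C, hC⟩ := hf.1.exists_bound
    obtain ⟨K, hK⟩ := (hc.contDiffOn (s := Set.Icc (-C) C)).exists_lipschitzOnWith (by decide)
      (convex_Icc _ _) isCompact_Icc
    have hf1 := hf.1
    rw [absolutelyContinuousOnInterval_iff] at hf1 ⊢
    intro ε hε
    obtain ⟨δ, hδ, H⟩ := hf1 (ε / (K + 1)) (by positivity)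
    refine ⟨δ, hδ, fun E hE hs => ?_⟩
    have h1 := H E hE hs
    have hmem : ∀ x ∈ Set.uIcc a b, f x ∈ Set.Icc (-C) C := fun x hx => by
      have := hC x hx
      rw [Real.norm_eq_abs, abs_le] at this
      exact this
    have h2 : ∑ i ∈ Finset.range E.1, dist (F (f (E.2 i).1)) (F (f (E.2 i).2)) ≤
        ∑ i ∈ Finset.range E.1, K * dist (f (E.2 i).1) (f (E.2 i).2) := by
      apply Finset.sum_le_sum
      intro i hi
      have := hE.1 i hi
      exact hK.dist_le_mul _ (hmem _ this.1) _ (hmem _ this.2)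
    rw [← Finset.mul_sum] at h2
    have h3 : 0 ≤ ∑ i ∈ Finset.range E.1, dist (f (E.2 i).1) (f (E.2 i).2) :=
      Finset.sum_nonneg fun i _ => dist_nonneg
    rw [lt_div_iff₀ (by positivity)] at h1
    nlinarith
  · filter_upwards [hf.2] with x h1 hx
    exact (hF (f x)).comp x (h1 hx)

theorem ACd.congr {f g f' : ℝ → ℝ} {a b : ℝ} (hf : ACd f f' a b)
    (h : ∀ x ∈ Set.uIcc a b, g x = f x) : ACd g f' a b := by
  refine ⟨?_, ?_⟩
  · have hf1 := hf.1
    rw [absolutelyContinuousOnInterval_iff] at hf1 ⊢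
    intro ε hε
    obtain ⟨δ, hδ, H⟩ := hf1 ε hε
    refine ⟨δ, hδ, fun E hE hs => ?_⟩
    convert H E hE hs using 1
    apply Finset.sum_congr rfl
    intro i hi
    have := hE.1 i hi
    rw [h _ this.1, h _ this.2]
  · have e1 : ∀ᵐ x : ℝ, x ≠ a := by simp [ae_iff]
    have e2 : ∀ᵐ x : ℝ, x ≠ b := by simp [ae_iff]
    filter_upwards [hf.2, e1, e2] with x h1 ha hb hx
    refine (h1 hx).congr_of_eventuallyEq ?_
    have : Set.uIcc a b ∈ nhds x := by
      rw [Set.mem_uIcc] at hx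
      rcases hx with hx | hx
      · rw [Set.uIcc_of_le (hx.1.trans hx.2)]
        exact Icc_mem_nhds (lt_of_le_of_ne hx.1 (Ne.symm ha)) (lt_of_le_of_ne hx.2 hb)
      · rw [Set.uIcc_of_ge (hx.1.trans hx.2)]
        exact Icc_mem_nhds (lt_of_le_of_ne hx.1 (Ne.symm hb)) (lt_of_le_of_ne hx.2 ha)
    filter_upwards [this] with y hy using h y hy

/-- first order linear equation -/
theorem linear_sol {y k : ℝ → ℝ} {T : ℝ} (hk : IntervalIntegrable k volume 0 T)
    (hy : ACd y (fun x => k x * y x) 0 T) :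
    ∀ x ∈ Set.uIcc 0 T, y x = y 0 * Real.exp (∫ t in (0:ℝ)..x, k t) := by
  intro x hx
  have hsub : Set.uIcc 0 x ⊆ Set.uIcc 0 T := Set.uIcc_subset_uIcc (by simp) hx
  have hE : ACd (fun x => Real.exp (-(∫ t in (0:ℝ)..x, k t)))
      (fun x => -Real.exp (-(∫ t in (0:ℝ)..x, k t)) * k x) 0 T :=
    ACd.comp (F := fun y => Real.exp (-y)) (F' := fun y => -Real.exp (-y))
      (fun z => by simpa using (hasDerivAt_neg z).exp) (by fun_prop) (ACd.integral hk)
  have hP := (hy.mul hE).mono hsub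
  have := hP.ftc
  have h0 : ∀ z, k z * y z * Real.exp (-(∫ t in (0:ℝ)..z, k t)) +
      y z * (-Real.exp (-(∫ t in (0:ℝ)..z, k t)) * k z) = 0 := fun z => by ring
  simp only [h0] at this
  simp only [intervalIntegral.integral_zero, intervalIntegral.integral_same, neg_zero,
    Real.exp_zero, mul_one] at this
  have h2 : y x * Real.exp (-(∫ t in (0:ℝ)..x, k t)) = y 0 := by linarith
  rw [← h2, mul_assoc, ← Real.exp_add]; simp

/-- calibration function -/
noncomputable def hcal (α θ : ℝ) : ℝ := 1 / max (Real.sin θ ^ 2) (Real.sin α ^ 2)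

theorem hcal_cont {α : ℝ} (hα : 0 < Real.sin α) : Continuous (hcal α) := by
  unfold hcal
  refine continuous_const.div (by fun_prop) fun x => ?_
  have : 0 < max (Real.sin x ^ 2) (Real.sin α ^ 2) := lt_max_of_lt_right (by positivity)
  exact this.ne'

theorem hcal_pos {α : ℝ} (hα : 0 < Real.sin α) (x : ℝ) : 0 < hcal α x := by
  have : 0 < max (Real.sin x ^ 2) (Real.sin α ^ 2) := lt_max_of_lt_right (by positivity)
  unfold hcal; positivity

theorem hcal_le {α : ℝ} (hα : 0 < Real.sin α) (x : ℝ) : hcal α x ≤ 1 / Real.sin α ^ 2 := by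
  unfold hcal
  exact one_div_le_one_div_of_le (by positivity) (le_max_right _ _)

theorem hcal_mul_le {α : ℝ} (hα : 0 < Real.sin α) (x : ℝ) : hcal α x * Real.sin x ^ 2 ≤ 1 := by
  have : 0 < max (Real.sin x ^ 2) (Real.sin α ^ 2) := lt_max_of_lt_right (by positivity)
  unfold hcal
  rw [one_div_mul_eq_div, div_le_one this]
  exact le_max_left _ _

theorem hcal_periodic (α : ℝ) : Function.Periodic (hcal α) Real.pi := by
  intro x
  simp [hcal, Real.sin_add_pi]

theorem hcal_integral {α : ℝ} (h0 : 0 < α) (h1 : α < Real.pi / 2) :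
    ∫ x in (0:ℝ)..Real.pi, hcal α x = 2 * α / Real.sin α ^ 2 + 2 * Real.cot α := by
  have hs : 0 < Real.sin α := Real.sin_pos_of_pos_of_lt_pi h0 (by linarith)
  have hc := hcal_cont hs
  have e := (hcal_periodic α).intervalIntegral_add_eq 0 (-α)
  rw [zero_add] at e
  rw [e, ← intervalIntegral.integral_add_adjacent_intervals (b := α)
    (hc.intervalIntegrable _ _) (hc.intervalIntegrable _ _)]
  have e1 : ∫ x in (-α)..α, hcal α x = ∫ x in (-α)..α, 1 / Real.sin α ^ 2 := by
    apply intervalIntegral.integral_congr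
    intro x hx
    rw [Set.uIcc_of_le (by linarith)] at hx
    have a1 : Real.sin x ≤ Real.sin α :=
      Real.sin_le_sin_of_le_of_le_pi_div_two (by linarith [hx.1]) h1.le hx.2
    have a2 : Real.sin (-α) ≤ Real.sin x :=
      Real.sin_le_sin_of_le_of_le_pi_div_two (by linarith) (by linarith [hx.2]) hx.1
    rw [Real.sin_neg] at a2
    simp only [hcal]
    rw [max_eq_right (sq_le_sq' a2 a1)]
  have hsx : ∀ x ∈ Set.uIcc α (-α + Real.pi), Real.sin α ≤ Real.sin x := by
    intro x hx
    rw [Set.uIcc_of_le (by linarith)] at hx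
    rcases le_total x (Real.pi / 2) with h | h
    · exact Real.sin_le_sin_of_le_of_le_pi_div_two (by linarith) h hx.1
    · rw [← Real.sin_pi_sub x]
      exact Real.sin_le_sin_of_le_of_le_pi_div_two (by linarith) (by linarith) (by linarith [hx.2])
  have e2 : ∫ x in α..(-α + Real.pi), hcal α x = Real.cot α + Real.cot α := by
    have : ∀ x ∈ Set.uIcc α (-α + Real.pi),
        HasDerivAt (fun x => -(Real.cos x / Real.sin x)) (hcal α x) x := by
      intro x hx
      have hx' := hsx x hx
      have hpos : 0 < Real.sin x := hs.trans_le hx'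
      have := ((Real.hasDerivAt_cos x).div (Real.hasDerivAt_sin x) hpos.ne').neg
      refine this.congr_deriv ?_
      simp only [hcal]
      rw [max_eq_left (by gcongr)]
      field_simp
      nlinarith [Real.sin_sq_add_cos_sq x]
    rw [intervalIntegral.integral_eq_sub_of_hasDerivAt this (hc.intervalIntegrable _ _)]
    rw [Real.cot_eq_cos_div_sin, neg_add_eq_sub, Real.cos_pi_sub, Real.sin_pi_sub]
    ring
  rw [e1, e2, intervalIntegral.integral_const, smul_eq_mul]
  ring

theorem sol_ACd {T : ℝ} (hT : 0 < T) {a u v : ℝ → ℝ} (ha : IntegrableOn a (Set.Icc 0 T))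
    (h : IsSolOn a u v 0 T) :
    ACd u v 0 T ∧ ACd v (fun x => -(a x * u x)) 0 T := by
  obtain ⟨h1, h2⟩ := h
  have hI : Set.uIcc 0 T = Set.Icc 0 T := Set.uIcc_of_le hT.le
  have hai : IntervalIntegrable a volume 0 T := by
    rw [intervalIntegrable_iff_integrableOn_Icc_of_le hT.le]; exact ha
  have huc : ContinuousOn u (Set.uIcc 0 T) := by
    rw [hI]; exact fun x hx => (h1 x hx).continuousWithinAt
  have hau : IntervalIntegrable (fun x => a x * u x) volume 0 T := hai.mul_continuousOn huc
  have hv : ACd v (fun x => -(a x * u x)) 0 T := by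
    have := (ACd.const (v 0) 0 T).sub (ACd.integral hau)
    refine (this.congr (g := v) ?_).congr_deriv ?_
    · rw [hI]; exact h2
    · filter_upwards with x _; simp
  refine ⟨?_, hv⟩
  have hvi : IntervalIntegrable v volume 0 T := hv.continuousOn.intervalIntegrable
  have := (ACd.const (u 0) 0 T).add (ACd.integral hvi)
  refine (this.congr (g := u) ?_).congr_deriv ?_
  · intro x hx
    rw [hI] at hx
    have : ∫ t in (0:ℝ)..x, v t = u x - u 0 := by
      apply intervalIntegral.integral_eq_sub_of_hasDerivAt_of_le hx.1
      · exact huc.mono (by rw [hI]; exact Set.Icc_subset_Icc le_rfl hx.2)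
      · intro y hy
        exact (h1 y ⟨hy.1.le, hy.2.le.trans hx.2⟩).hasDerivAt
          (Icc_mem_nhds hy.1 (hy.2.trans_le hx.2))
      · exact hvi.mono_set (Set.uIcc_subset_uIcc (by simp) (by rw [hI]; exact hx))
    linarith
  · filter_upwards with x _; simp

theorem energy_pos {T ω : ℝ} (hT : 0 < T) (hω : 0 < ω) {a u v : ℝ → ℝ}
    (ha : IntervalIntegrable a volume 0 T)
    (hu : ACd u v 0 T) (hv : ACd v (fun x => -(a x * u x)) 0 T)
    (hne : ∃ x ∈ Set.Icc 0 T, u x ≠ 0) :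
    ∀ x ∈ Set.Icc 0 T, 0 < ω ^ 2 * u x ^ 2 + v x ^ 2 := by
  have hI : Set.uIcc 0 T = Set.Icc 0 T := Set.uIcc_of_le hT.le
  set E : ℝ → ℝ := fun x => ω ^ 2 * u x ^ 2 + v x ^ 2 with hE
  set k : ℝ → ℝ := fun x => (a x - ω ^ 2) * (-2 * (u x * v x) / E x) with hk
  have hEd : ACd E (fun x => k x * E x) 0 T := by
    have := (((hu.mul hu).const_mul (ω ^ 2)).add (hv.mul hv))
    refine (this.congr (g := E) ?_).congr_deriv ?_
    · intro x _; simp only [hE]; ring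
    · filter_upwards with x _
      by_cases h0 : E x = 0
      · have hv0 : v x = 0 := by
          simp only [hE] at h0
          have := sq_nonneg (ω * u x)
          have := sq_nonneg (v x)
          have : v x ^ 2 = 0 := by nlinarith
          exact pow_eq_zero_iff (two_ne_zero) |>.1 this
        rw [h0, hv0]; ring
      · simp only [hk]
        field_simp
        ring
  have hki : IntervalIntegrable k volume 0 T := by
    have hc : IntervalIntegrable (fun x => a x - ω ^ 2) volume 0 T :=
      ha.sub (continuous_const.intervalIntegrable _ _)
    rw [intervalIntegrable_iff] at hc ⊢
    have hsub : Set.uIoc 0 T ⊆ Set.uIcc 0 T := Set.uIoc_subset_uIcc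
    have hum := (hu.continuousOn.mono hsub).aestronglyMeasurable (μ := volume) measurableSet_uIoc
    have hvm := (hv.continuousOn.mono hsub).aestronglyMeasurable (μ := volume) measurableSet_uIoc
    have hEm := (hEd.continuousOn.mono hsub).aestronglyMeasurable (μ := volume) measurableSet_uIoc
    have hq : AEStronglyMeasurable (fun x => -2 * (u x * v x) / E x)
        (volume.restrict (Set.uIoc 0 T)) :=
      ((hum.mul hvm).const_mul (-2)).aemeasurable.div hEm.aemeasurable |>.aestronglyMeasurable
    refine Integrable.mul_bdd (c := 1 / ω) hc hq ?_
    filter_upwards with x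
    rw [Real.norm_eq_abs, abs_div]
    rcases (show 0 ≤ E x by simp only [hE]; positivity).eq_or_lt with h0 | h0
    · rw [← h0]; simp; positivity
    · rw [abs_of_pos h0, div_le_div_iff₀ h0 hω, one_mul]
      simp only [hE]
      rw [abs_mul, abs_mul, abs_neg, abs_two, ← sq_abs (u x), ← sq_abs (v x)]
      nlinarith [sq_nonneg (ω * |u x| - |v x|)]
  have hsol := linear_sol hki hEd
  obtain ⟨x0, hx0, hux0⟩ := hne
  have hE0 : 0 < E 0 := by
    have h0 : 0 < E x0 := by simp only [hE]; positivity
    rw [hsol x0 (by rw [hI]; exact hx0)] at h0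
    exact (pos_iff_pos_of_mul_pos h0).2 (Real.exp_pos _)
  intro x hx
  have := hsol x (by rw [hI]; exact hx)
  show 0 < E x
  rw [this]; positivity

/-- Existence of the Pruefer angle. -/
theorem pruefer {T ω : ℝ} (hT : 0 < T) (hω : 0 < ω) {a u v : ℝ → ℝ}
    (ha : IntervalIntegrable a volume 0 T)
    (hu : ACd u v 0 T) (hv : ACd v (fun x => -(a x * u x)) 0 T)
    (hne : ∃ x ∈ Set.Icc 0 T, u x ≠ 0) (hpu : u 0 = u T) (hpv : v 0 = v T) :
    ∃ θ : ℝ → ℝ, ACd θ (fun x => ω + (a x - ω ^ 2) / ω * Real.sin (θ x) ^ 2) 0 T ∧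
      ∃ k : ℤ, θ T = θ 0 + k * (2 * Real.pi) := by
  have hI : Set.uIcc 0 T = Set.Icc 0 T := Set.uIcc_of_le hT.le
  have hpos := energy_pos hT hω ha hu hv hne
  set E : ℝ → ℝ := fun x => ω ^ 2 * u x ^ 2 + v x ^ 2 with hE
  have hEpos : ∀ x ∈ Set.uIcc 0 T, 0 < E x := by rw [hI]; exact hpos
  have hc : IntervalIntegrable (fun x => a x - ω ^ 2) volume 0 T :=
    ha.sub (continuous_const.intervalIntegrable _ _)
  have huc := hu.continuousOn
  have hvc := hv.continuousOn
  have hEc : ContinuousOn E (Set.uIcc 0 T) := by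
    simp only [hE]; fun_prop
  have hEne : ∀ x ∈ Set.uIcc 0 T, E x ≠ 0 := fun x hx => (hEpos x hx).ne'
  set φ : ℝ → ℝ := fun x => ω + (a x - ω ^ 2) * (ω * u x ^ 2 / E x) with hφ
  have hφi : IntervalIntegrable φ volume 0 T := by
    refine (continuous_const.intervalIntegrable _ _).add (hc.mul_continuousOn ?_)
    exact (by fun_prop : ContinuousOn (fun x => ω * u x ^ 2) (Set.uIcc 0 T)).div hEc hEne
  set z0 : ℂ := ⟨v 0, ω * u 0⟩ with hz0
  set θ : ℝ → ℝ := fun x => z0.arg + ∫ t in (0:ℝ)..x, φ t with hθ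
  have hθ0 : θ 0 = z0.arg := by simp [hθ]
  have hθd : ACd θ φ 0 T := by
    refine ((ACd.const z0.arg 0 T).add (ACd.integral hφi)).congr_deriv ?_
    filter_upwards with x _; simp
  have hsin : ACd (fun x => Real.sin (θ x)) (fun x => Real.cos (θ x) * φ x) 0 T :=
    hθd.comp Real.hasDerivAt_sin Real.continuous_cos
  have hcos : ACd (fun x => Real.cos (θ x)) (fun x => -Real.sin (θ x) * φ x) 0 T :=
    hθd.comp (F := Real.cos) (F' := fun y => -Real.sin y) Real.hasDerivAt_cos (by fun_prop)
  have hθc := hθd.continuousOn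
  set w : ℝ → ℝ := fun x => v x * Real.sin (θ x) - ω * (u x * Real.cos (θ x)) with hw
  have hwd : ACd w (fun x => (a x - ω ^ 2) * (-(u x * v x) / E x) * w x) 0 T := by
    refine ((hv.mul hsin).sub ((hu.mul hcos).const_mul ω)).congr_deriv ?_
    filter_upwards with x hx
    have := hEne x hx
    simp only [hw, hφ]
    field_simp
    simp only [hE]
    ring
  have hw0 : ∀ x ∈ Set.uIcc 0 T, w x = 0 := by
    intro x hx
    rw [linear_sol ?_ hwd x hx]
    · have h1 := Complex.norm_mul_cos_arg z0
      have h2 := Complex.norm_mul_sin_arg z0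
      have h3 : z0.re = v 0 := rfl
      have h4 : z0.im = ω * u 0 := rfl
      rw [h3] at h1; rw [h4] at h2
      have : w 0 = 0 := by
        simp only [hw]
        rw [hθ0, ← h1, ← mul_assoc ω, ← h2]; ring
      rw [this, zero_mul]
    · refine hc.mul_continuousOn ?_
      exact (by fun_prop : ContinuousOn (fun x => -(u x * v x)) (Set.uIcc 0 T)).div hEc hEne
  set p : ℝ → ℝ := fun x => v x * Real.cos (θ x) + ω * (u x * Real.sin (θ x)) with hp
  have hup : ∀ x ∈ Set.uIcc 0 T, ω * u x = p x * Real.sin (θ x) := by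
    intro x hx
    have := hw0 x hx
    simp only [hw] at this
    simp only [hp]
    linear_combination (-ω * u x) * Real.sin_sq_add_cos_sq (θ x) - Real.cos (θ x) * this
  have hvp : ∀ x ∈ Set.uIcc 0 T, v x = p x * Real.cos (θ x) := by
    intro x hx
    have := hw0 x hx
    simp only [hw] at this
    simp only [hp]
    linear_combination (-v x) * Real.sin_sq_add_cos_sq (θ x) + Real.sin (θ x) * this
  have hEp : ∀ x ∈ Set.uIcc 0 T, E x = p x ^ 2 := by
    intro x hx
    simp only [hE]
    rw [← mul_pow, hup x hx, hvp x hx]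
    linear_combination p x ^ 2 * Real.sin_sq_add_cos_sq (θ x)
  have hpne : ∀ x ∈ Set.uIcc 0 T, p x ≠ 0 := by
    intro x hx h0
    have := hEpos x hx
    rw [hEp x hx, h0] at this
    simp at this
  have hφs : ∀ x ∈ Set.uIcc 0 T, φ x = ω + (a x - ω ^ 2) / ω * Real.sin (θ x) ^ 2 := by
    intro x hx
    simp only [hφ]
    rw [hEp x hx]
    have h1 := hpne x hx
    have h2 : u x = p x * Real.sin (θ x) / ω := by rw [← hup x hx]; field_simp
    rw [h2]
    field_simp
  have hpd : ACd p (fun x => (a x - ω ^ 2) * (-(Real.sin (θ x) * Real.cos (θ x)) / ω) * p x) 0 T := by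
    refine ((hv.mul hcos).add ((hu.mul hsin).const_mul ω)).congr_deriv ?_
    filter_upwards with x hx
    have h1 := hw0 x hx
    have h2 := hup x hx
    simp only [hw] at h1
    have e : (a x - ω ^ 2) * (-(Real.sin (θ x) * Real.cos (θ x)) / ω) * p x =
      (a x - ω ^ 2) * (-Real.cos (θ x) / ω) * (p x * Real.sin (θ x)) := by ring
    rw [e, ← h2]
    field_simp
    linear_combination (ω - φ x) * h1
  have hpsol := linear_sol (hc.mul_continuousOn
    (by fun_prop : ContinuousOn (fun x => -(Real.sin (θ x) * Real.cos (θ x)) / ω)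
      (Set.uIcc 0 T))) hpd T (by simp)
  have hm0 : (0:ℝ) ∈ Set.uIcc 0 T := by simp
  have hmT : T ∈ Set.uIcc 0 T := by simp
  have hpp : p T = p 0 := by
    set e := Real.exp (∫ t in (0:ℝ)..T, (a t - ω ^ 2) * (-(Real.sin (θ t) * Real.cos (θ t)) / ω))
      with he
    have hepos : 0 < e := Real.exp_pos _
    have h1 : p T ^ 2 = p 0 ^ 2 := by
      rw [← hEp 0 hm0, ← hEp T hmT]
      simp only [hE]; rw [hpu, hpv]
    rcases sq_eq_sq_iff_eq_or_eq_neg.1 h1 with h | h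
    · exact h
    · exfalso
      rw [h] at hpsol
      have : p 0 * (e + 1) = 0 := by linarith
      rcases mul_eq_zero.1 this with h | h
      · exact hpne 0 hm0 h
      · linarith
  refine ⟨θ, hθd.congr_deriv ?_, ?_⟩
  · filter_upwards with x hx using hφs x hx
  · have hs : Real.sin (θ T) = Real.sin (θ 0) := by
      have h1 := hup 0 hm0
      rw [hpu, hup T hmT, hpp] at h1
      exact mul_left_cancel₀ (hpne 0 hm0) h1
    have hcs : Real.cos (θ T) = Real.cos (θ 0) := by
      have h1 := hvp 0 hm0
      rw [hpv, hvp T hmT, hpp] at h1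
      exact mul_left_cancel₀ (hpne 0 hm0) h1
    have := Real.Angle.cos_sin_inj hcs hs
    obtain ⟨k, hk⟩ := Real.Angle.angle_eq_iff_two_pi_dvd_sub.1 this
    exact ⟨k, by linarith⟩

theorem lower_bound (T : ℝ) (hT : 0 < T) (n : ℕ) (hn : 1 ≤ n) (a : ℝ → ℝ) (ha : a ∈ LambdaN T n) :
    beta1 T n ≤ ∫ x in (0:ℝ)..T, |a x - lam T n| := by
  obtain ⟨⟨_, _, hai⟩, ⟨hle, hlt⟩, u, v, ⟨hsol, hpu, hpv⟩, hne⟩ := ha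
  have hI : Set.uIcc 0 T = Set.Icc 0 T := Set.uIcc_of_le hT.le
  have hnr : (1:ℝ) ≤ n := by exact_mod_cast hn
  have hpi := Real.pi_pos
  set ω : ℝ := 2 * n * Real.pi / T with hω
  have hωp : 0 < ω := by positivity
  have hlam : lam T n = ω ^ 2 := by simp only [lam, hω]; ring
  have haI : IntervalIntegrable a volume 0 T := by
    rw [intervalIntegrable_iff_integrableOn_Icc_of_le hT.le]; exact hai
  obtain ⟨hu, hv⟩ := sol_ACd hT hai hsol
  obtain ⟨θ, hθ, k, hk⟩ := pruefer hT hωp haI hu hv hne hpu hpv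
  have hc0 : ∀ᵐ x, x ∈ Set.uIcc 0 T → 0 ≤ a x - ω ^ 2 := by
    rw [ae_restrict_iff' measurableSet_Icc] at hle
    filter_upwards [hle] with x hx h
    have := hx (by rwa [hI] at h)
    rw [hlam] at this; linarith
  have hθinc : ∀ x ∈ Set.Icc 0 T, ∀ y ∈ Set.Icc 0 T, x ≤ y → ω * (y - x) ≤ θ y - θ x := by
    intro x hx y hy hxy
    have hs : Set.uIcc x y ⊆ Set.uIcc 0 T := Set.uIcc_subset_uIcc (by rwa [hI]) (by rwa [hI])
    have h1 := hθ.mono hs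
    rw [← h1.ftc]
    have : ω * (y - x) = ∫ t in x..y, ω := by simp [mul_comm]
    rw [this]
    apply intervalIntegral.integral_mono_ae_restrict hxy
      (continuous_const.intervalIntegrable _ _) h1.intervalIntegrable
    rw [Filter.EventuallyLE, ae_restrict_iff' measurableSet_Icc]
    filter_upwards [hc0] with t ht h
    have := ht (hs (by rwa [Set.uIcc_of_le hxy]))
    have : 0 ≤ (a t - ω ^ 2) / ω * Real.sin (θ t) ^ 2 := by positivity
    linarith
  have hc : IntervalIntegrable (fun x => a x - ω ^ 2) volume 0 T :=
    haI.sub (continuous_const.intervalIntegrable _ _)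
  have hstrict : ω * T < θ T - θ 0 := by
    have h0 := hθinc 0 ⟨le_rfl, hT.le⟩ T ⟨hT.le, le_rfl⟩ hT.le
    rw [sub_zero] at h0
    refine lt_of_le_of_ne h0 fun heq => ?_
    have hd : IntervalIntegrable (fun x => (a x - ω ^ 2) / ω * Real.sin (θ x) ^ 2) volume 0 T := by
      have := hθ.intervalIntegrable.sub ((continuous_const (y := ω)).intervalIntegrable (μ := volume) 0 T)
      refine this.congr ?_
      intro x _
      simp
    have hz : ∫ x in (0:ℝ)..T, (a x - ω ^ 2) / ω * Real.sin (θ x) ^ 2 = 0 := by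
      have := hθ.ftc
      rw [intervalIntegral.integral_add (continuous_const.intervalIntegrable _ _) hd] at this
      simp only [intervalIntegral.integral_const, smul_eq_mul] at this
      linarith
    rw [intervalIntegral.integral_eq_zero_iff_of_nonneg_ae] at hz
    rotate_left
    · rw [Set.Ioc_eq_empty (by linarith : ¬ T < 0), Set.union_empty, Filter.EventuallyLE,
        ae_restrict_iff' measurableSet_Ioc]
      filter_upwards [hc0] with t ht h
      have := ht (by rw [hI]; exact ⟨h.1.le, h.2⟩)
      simp only [Pi.zero_apply]
      positivity
    · exact hd
    rw [Set.Ioc_eq_empty (by linarith : ¬ T < 0), Set.union_empty, Filter.EventuallyEq,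
        ae_restrict_iff' measurableSet_Ioc] at hz
    have hinj : Set.InjOn θ (Set.Icc 0 T) := by
      intro x hx y hy hxy
      rcases le_total x y with h | h
      · have := hθinc x hx y hy h
        rw [hxy] at this
        nlinarith
      · have := hθinc y hy x hx h
        rw [hxy] at this
        nlinarith
    have hcount : (Set.Icc 0 T ∩ θ ⁻¹' (Set.range fun m : ℤ => (m:ℝ) * Real.pi)).Countable := by
      apply Set.MapsTo.countable_of_injOn (f := θ) (t := Set.range fun m : ℤ => (m:ℝ) * Real.pi)
      · intro x hx; exact hx.2
      · exact hinj.mono Set.inter_subset_left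
      · exact Set.countable_range _
    have hnull : ∀ᵐ x, x ∉ (Set.Icc 0 T ∩ θ ⁻¹' (Set.range fun m : ℤ => (m:ℝ) * Real.pi)) :=
      hcount.ae_notMem volume
    have e1 : ∀ᵐ x : ℝ, x ≠ 0 := by simp [ae_iff]
    have : ∀ᵐ x, x ∉ {x | x ∈ Set.Icc 0 T ∧ lam T n < a x} := by
      filter_upwards [hz, hnull, e1] with x hx1 hx2 hx3 hx4
      obtain ⟨hx4, hx5⟩ := hx4
      have hx6 := hx1 ⟨lt_of_le_of_ne hx4.1 (Ne.symm hx3), hx4.2⟩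
      rw [hlam] at hx5
      have hx7 : Real.sin (θ x) ≠ 0 := by
        intro h
        obtain ⟨m, hm⟩ := Real.sin_eq_zero_iff.1 h
        exact hx2 ⟨hx4, m, hm⟩
      have : 0 < (a x - ω ^ 2) / ω * Real.sin (θ x) ^ 2 := by
        have : 0 < a x - ω ^ 2 := by linarith
        positivity
      simp only [Pi.zero_apply] at hx6
      linarith
    rw [← measure_eq_zero_iff_ae_notMem] at this
    exact hlt.ne' this
  have hkn : (n:ℝ) + 1 ≤ k := by
    have h1 : ω * T = n * (2 * Real.pi) := by rw [hω]; field_simp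
    rw [hk, h1] at hstrict
    have h2 : (n:ℝ) < k := by
      by_contra hcon
      have : (k:ℝ) * (2 * Real.pi) ≤ n * (2 * Real.pi) := by
        apply mul_le_mul_of_nonneg_right (not_lt.1 hcon) (by positivity)
      linarith
    have h3 : ((n:ℤ)) < k := by exact_mod_cast h2
    have h4 : (n:ℤ) + 1 ≤ k := h3
    exact_mod_cast h4
  set α : ℝ := n * Real.pi / (2 * (n + 1)) with hα
  have hα0 : 0 < α := by positivity
  have hα1 : α < Real.pi / 2 := by
    rw [hα, div_lt_div_iff₀ (by positivity) (by positivity)]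
    nlinarith
  have hs : 0 < Real.sin α := Real.sin_pos_of_pos_of_lt_pi hα0 (by linarith)
  have hcc := hcal_cont hs
  have hG : ACd (fun x => ∫ t in (0:ℝ)..θ x, hcal α t)
      (fun x => hcal α (θ x) * (ω + (a x - ω ^ 2) / ω * Real.sin (θ x) ^ 2)) 0 T := by
    refine hθ.comp (F := fun y => ∫ t in (0:ℝ)..y, hcal α t) (fun y => ?_) hcc
    exact intervalIntegral.integral_hasDerivAt_right (hcc.intervalIntegrable _ _)
      hcc.stronglyMeasurable.stronglyMeasurableAtFilter hcc.continuousAt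
  have hGT := hG.ftc
  rw [intervalIntegral.integral_interval_sub_left (hcc.intervalIntegrable _ _)
    (hcc.intervalIntegrable _ _)] at hGT
  have hmono : ∫ x in (0:ℝ)..T, hcal α (θ x) * (ω + (a x - ω ^ 2) / ω * Real.sin (θ x) ^ 2) ≤
      ∫ x in (0:ℝ)..T, ((a x - ω ^ 2) / ω + ω / Real.sin α ^ 2) := by
    apply intervalIntegral.integral_mono_ae_restrict hT.le hG.intervalIntegrable
      ((hc.div_const ω).add (continuous_const.intervalIntegrable _ _))
    rw [Filter.EventuallyLE, ae_restrict_iff' measurableSet_Icc]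
    filter_upwards [hc0] with t ht h
    have h0 := ht (by rwa [hI])
    have h1 := hcal_mul_le hs (θ t)
    have h2 := mul_le_mul_of_nonneg_left (hcal_le hs (θ t)) hωp.le
    have h3 := mul_le_mul_of_nonneg_left h1 (div_nonneg h0 hωp.le)
    calc _ = ω * hcal α (θ t) + (a t - ω ^ 2) / ω * (hcal α (θ t) * Real.sin (θ t) ^ 2) := by ring
      _ ≤ ω * (1 / Real.sin α ^ 2) + (a t - ω ^ 2) / ω * 1 := by linarith
      _ = _ := by ring
  have hint : ∫ x in (0:ℝ)..T, ((a x - ω ^ 2) / ω + ω / Real.sin α ^ 2) =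
      (∫ x in (0:ℝ)..T, (a x - ω ^ 2)) / ω + T * (ω / Real.sin α ^ 2) := by
    rw [intervalIntegral.integral_add (hc.div_const ω) (continuous_const.intervalIntegrable _ _),
      intervalIntegral.integral_div, intervalIntegral.integral_const, smul_eq_mul, sub_zero]
  have habs : ∫ x in (0:ℝ)..T, |a x - lam T n| = ∫ x in (0:ℝ)..T, (a x - ω ^ 2) := by
    apply intervalIntegral.integral_congr_ae
    filter_upwards [hc0] with t ht h
    rw [hlam, abs_of_nonneg (ht (Set.uIoc_subset_uIcc h))]
  have hH : (2 * ((n:ℝ) + 1)) * (2 * α / Real.sin α ^ 2 + 2 * Real.cot α) ≤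
      ∫ x in (θ 0)..(θ T), hcal α x := by
    have hper : ∫ x in (θ 0)..(θ 0 + (2 * (n + 1) : ℕ) • Real.pi), hcal α x =
        (2 * (n + 1) : ℕ) • ∫ x in (0:ℝ)..Real.pi, hcal α x := by
      have := (hcal_periodic α).intervalIntegral_add_zsmul_eq (2 * (n + 1) : ℕ) (θ 0)
        (fun _ _ => hcc.intervalIntegrable _ _)
      have e := (hcal_periodic α).intervalIntegral_add_eq (θ 0) 0
      rw [zero_add] at e
      rw [e] at this
      simpa using this
    rw [hcal_integral hα0 hα1] at hper
    rw [← intervalIntegral.integral_add_adjacent_intervals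
      (b := θ 0 + (2 * (n + 1) : ℕ) • Real.pi)
      (hcc.intervalIntegrable _ _) (hcc.intervalIntegrable _ _), hper]
    have : 0 ≤ ∫ x in (θ 0 + (2 * (n + 1) : ℕ) • Real.pi)..(θ T), hcal α x := by
      apply intervalIntegral.integral_nonneg
      · rw [hk, nsmul_eq_mul]
        push_cast
        nlinarith
      · intro x _; exact (hcal_pos hs x).le
    simp only [nsmul_eq_mul] at this ⊢
    push_cast at this ⊢
    linarith
  rw [habs]
  set J := ∫ x in (0:ℝ)..T, (a x - ω ^ 2)
  rw [hGT, hint] at hmono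
  have h1 : ω * ((2 * ((n:ℝ) + 1)) * (2 * α / Real.sin α ^ 2 + 2 * Real.cot α)
      - T * (ω / Real.sin α ^ 2)) ≤ J := by
    have : (2 * ((n:ℝ) + 1)) * (2 * α / Real.sin α ^ 2 + 2 * Real.cot α)
      - T * (ω / Real.sin α ^ 2) ≤ J / ω := by linarith
    calc _ ≤ ω * (J / ω) := mul_le_mul_of_nonneg_left this hωp.le
      _ = J := by field_simp
  refine le_trans (le_of_eq ?_) h1
  have h2 : T * ω = 4 * ((n:ℝ) + 1) * α := by rw [hω, hα]; field_simp; ring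
  have h3 : (2 * ((n:ℝ) + 1)) * (2 * α / Real.sin α ^ 2 + 2 * Real.cot α)
      - T * (ω / Real.sin α ^ 2) = 4 * (n + 1) * Real.cot α := by
    have h4 : T * (ω / Real.sin α ^ 2) = 4 * ((n:ℝ) + 1) * α / Real.sin α ^ 2 := by
      rw [← h2]; ring
    rw [h4]; ring
  rw [h3]
  simp only [beta1]
  rw [← hα, hω]
  ring

theorem tan_cot_bounds {ρ g : ℝ} (hρ : 0 < ρ) (hρ1 : ρ < 1) (hg : 0 < g) (hg1 : g < Real.pi / 2) :
    1 ≤ Real.tan g * (Real.cos (ρ * g) / Real.sin (ρ * g)) ∧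
    Real.tan g * (Real.cos (ρ * g) / Real.sin (ρ * g)) ≤
      Real.cot (ρ * (Real.pi / 2)) * Real.tan g +
        (Real.pi / 2) ^ 2 / Real.sin (ρ * (Real.pi / 2)) := by
  have hpi := Real.pi_pos
  have hlt : ρ * g < g := by nlinarith
  have hp : 0 < ρ * g := by positivity
  have hB : ρ * (Real.pi / 2) < Real.pi / 2 := by nlinarith
  have hsA : 0 < Real.sin (ρ * g) := Real.sin_pos_of_pos_of_lt_pi hp (by linarith)
  have hcA : 0 < Real.cos (ρ * g) := Real.cos_pos_of_mem_Ioo ⟨by linarith, by linarith⟩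
  have hsg : 0 < Real.sin g := Real.sin_pos_of_pos_of_lt_pi hg (by linarith)
  have hcg : 0 < Real.cos g := Real.cos_pos_of_mem_Ioo ⟨by linarith, by linarith⟩
  have hsB : 0 < Real.sin (ρ * (Real.pi / 2)) :=
    Real.sin_pos_of_pos_of_lt_pi (by positivity) (by linarith)
  rw [Real.tan_eq_sin_div_cos, Real.cot_eq_cos_div_sin]
  constructor
  · have h1 : 0 < Real.sin (g - ρ * g) :=
      Real.sin_pos_of_pos_of_lt_pi (by linarith) (by linarith)
    rw [Real.sin_sub] at h1
    rw [div_mul_div_comm, one_le_div (by positivity)]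
    linarith
  · have h1 : Real.sin (ρ * (Real.pi / 2) - ρ * g) ≤ ρ * (Real.pi / 2) - ρ * g :=
      Real.sin_le (by nlinarith)
    have h2 : 2 / Real.pi * (Real.pi / 2 - g) ≤ Real.sin (Real.pi / 2 - g) :=
      Real.mul_le_sin (by linarith) (by linarith)
    rw [Real.sin_pi_div_two_sub] at h2
    have h3 : 2 / Real.pi * (ρ * g) ≤ Real.sin (ρ * g) := Real.mul_le_sin hp.le (by linarith)
    have h4 : Real.sin g ≤ g := Real.sin_le hg.le
    rw [Real.sin_sub] at h1
    set sB := Real.sin (ρ * (Real.pi / 2))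
    set cB := Real.cos (ρ * (Real.pi / 2))
    set sA := Real.sin (ρ * g)
    set cA := Real.cos (ρ * g)
    set sg := Real.sin g
    set cg := Real.cos g
    have h2' : Real.pi / 2 - g ≤ Real.pi / 2 * cg := by
      have := mul_le_mul_of_nonneg_left h2 (by positivity : 0 ≤ Real.pi / 2)
      calc Real.pi / 2 - g = Real.pi / 2 * (2 / Real.pi * (Real.pi / 2 - g)) := by field_simp
        _ ≤ _ := this
    have h3' : ρ * g ≤ Real.pi / 2 * sA := by
      have := mul_le_mul_of_nonneg_left h3 (by positivity : 0 ≤ Real.pi / 2)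
      calc ρ * g = Real.pi / 2 * (2 / Real.pi * (ρ * g)) := by field_simp
        _ ≤ _ := this
    have key : sg * (sB * cA - cB * sA) ≤ (Real.pi / 2) ^ 2 * (cg * sA) := by
      calc sg * (sB * cA - cB * sA) ≤ sg * (ρ * (Real.pi / 2 - g)) := by
            apply mul_le_mul_of_nonneg_left _ hsg.le; linarith
        _ ≤ g * (ρ * (Real.pi / 2 - g)) := by
            apply mul_le_mul_of_nonneg_right h4
            exact mul_nonneg hρ.le (by linarith)
        _ = (ρ * g) * (Real.pi / 2 - g) := by ring
        _ ≤ (Real.pi / 2 * sA) * (Real.pi / 2 * cg) := by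
            apply mul_le_mul h3' h2' (by linarith) (by positivity)
        _ = _ := by ring
    have e : (Real.pi / 2) ^ 2 / sB - (sg / cg * (cA / sA) - cB / sB * (sg / cg)) =
        ((Real.pi / 2) ^ 2 * (cg * sA) - sg * (sB * cA - cB * sA)) / (sB * cg * sA) := by
      field_simp
    have : 0 ≤ ((Real.pi / 2) ^ 2 * (cg * sA) - sg * (sB * cA - cB * sA)) / (sB * cg * sA) :=
      div_nonneg (by linarith) (by positivity)
    linarith

theorem tan_cot_bounds' {ρ g : ℝ} (hρ : 0 < ρ) (hρ1 : ρ < 1) (hg0 : g ≠ 0)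
    (hg1 : g < Real.pi / 2) (hg2 : -(Real.pi / 2) < g) :
    1 ≤ Real.tan g * (Real.cos (ρ * g) / Real.sin (ρ * g)) ∧
    Real.tan g * (Real.cos (ρ * g) / Real.sin (ρ * g)) ≤
      Real.cot (ρ * (Real.pi / 2)) * |Real.tan g| +
        (Real.pi / 2) ^ 2 / Real.sin (ρ * (Real.pi / 2)) := by
  rcases lt_or_gt_of_ne hg0 with h | h
  · have := tan_cot_bounds hρ hρ1 (g := -g) (by linarith) (by linarith)
    have ht : 0 < Real.tan (-g) := Real.tan_pos_of_pos_of_lt_pi_div_two (by linarith) (by linarith)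
    rw [Real.tan_neg] at ht
    rw [abs_of_neg (by linarith)]
    simp only [mul_neg, Real.tan_neg, Real.sin_neg, Real.cos_neg, div_neg, neg_mul, neg_neg] at this ⊢
    exact this
  · have := tan_cot_bounds hρ hρ1 h hg1
    have ht : 0 < Real.tan g := Real.tan_pos_of_pos_of_lt_pi_div_two h hg1
    rw [abs_of_pos ht]
    exact this

/-- smoothed triangle wave -/
noncomputable def gT (s q x : ℝ) : ℝ := Real.arcsin (s * Real.sin (q * x))
/-- `1 - S²` -/
noncomputable def cT (s q x : ℝ) : ℝ := 1 - (s * Real.sin (q * x)) ^ 2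
/-- derivative -/
noncomputable def g1T (s q x : ℝ) : ℝ := s * q * Real.cos (q * x) / Real.sqrt (cT s q x)
/-- defect -/
noncomputable def dT (s q x : ℝ) : ℝ := q ^ 2 * (1 - s ^ 2) / cT s q x
/-- minus second derivative -/
noncomputable def g2T (s q x : ℝ) : ℝ := dT s q x * Real.tan (gT s q x)

section wave
variable {s q : ℝ}

theorem S_abs (hs : 0 < s) (hs1 : s < 1) (x : ℝ) : |s * Real.sin (q * x)| < 1 := by
  rw [abs_mul, abs_of_pos hs]
  have := Real.abs_sin_le_one (q * x)
  nlinarith [abs_nonneg (Real.sin (q * x))]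

theorem cT_pos (hs : 0 < s) (hs1 : s < 1) (x : ℝ) : 0 < cT s q x := by
  have := S_abs (q := q) hs hs1 x
  unfold cT
  have := (sq_lt_one_iff_abs_lt_one _).2 this
  linarith

theorem cT_cont : Continuous (cT s q) := by unfold cT; fun_prop

theorem gT_cont : Continuous (gT s q) := by
  unfold gT; exact Real.continuous_arcsin.comp (by fun_prop)

theorem g1T_cont (hs : 0 < s) (hs1 : s < 1) : Continuous (g1T s q) := by
  unfold g1T
  exact (by fun_prop : Continuous fun x => s * q * Real.cos (q * x)).div
    (Real.continuous_sqrt.comp cT_cont) fun x => (Real.sqrt_pos.2 (cT_pos hs hs1 x)).ne'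

theorem dT_cont (hs : 0 < s) (hs1 : s < 1) : Continuous (dT s q) := by
  unfold dT
  exact continuous_const.div cT_cont fun x => (cT_pos hs hs1 x).ne'

theorem dT_pos (hq : 0 < q) (hs : 0 < s) (hs1 : s < 1) (x : ℝ) : 0 < dT s q x := by
  have := cT_pos (q := q) hs hs1 x
  have : 0 < 1 - s ^ 2 := by nlinarith
  unfold dT; positivity

theorem tan_gT (x : ℝ) :
    Real.tan (gT s q x) = s * Real.sin (q * x) / Real.sqrt (cT s q x) := by
  unfold gT cT; rw [Real.tan_arcsin]

theorem g2T_cont (hs : 0 < s) (hs1 : s < 1) : Continuous (g2T s q) := by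
  have : g2T s q = fun x => dT s q x * (s * Real.sin (q * x) / Real.sqrt (cT s q x)) := by
    funext x; unfold g2T; rw [tan_gT]
  rw [this]
  exact (dT_cont hs hs1).mul ((by fun_prop : Continuous fun x => s * Real.sin (q * x)).div
    (Real.continuous_sqrt.comp cT_cont) fun x => (Real.sqrt_pos.2 (cT_pos hs hs1 x)).ne')

theorem gT_lt (hs : 0 < s) (hs1 : s < 1) (x : ℝ) :
    -(Real.pi / 2) < gT s q x ∧ gT s q x < Real.pi / 2 := by
  have := abs_lt.1 (S_abs (q := q) hs hs1 x)
  exact ⟨Real.neg_pi_div_two_lt_arcsin.2 this.1, Real.arcsin_lt_pi_div_two.2 this.2⟩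

theorem gT_deriv (hs : 0 < s) (hs1 : s < 1) (x : ℝ) : HasDerivAt (gT s q) (g1T s q x) x := by
  have h := abs_lt.1 (S_abs (q := q) hs hs1 x)
  have h1 : HasDerivAt (fun x => s * Real.sin (q * x)) (s * (Real.cos (q * x) * q)) x := by
    have : HasDerivAt (fun x => q * x) q x := by simpa using (hasDerivAt_id x).const_mul q
    exact this.sin.const_mul s
  have := (Real.hasDerivAt_arcsin h.1.ne' h.2.ne).comp x h1
  refine this.congr_deriv ?_
  unfold g1T cT
  ring

theorem g1T_deriv (hs : 0 < s) (hs1 : s < 1) (x : ℝ) : HasDerivAt (g1T s q) (-g2T s q x) x := by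
  have hid : HasDerivAt (fun x => q * x) q x := by simpa using (hasDerivAt_id x).const_mul q
  have h1 : HasDerivAt (fun x => s * Real.sin (q * x)) (s * (Real.cos (q * x) * q)) x :=
    hid.sin.const_mul s
  have hcp := cT_pos (q := q) hs hs1 x
  have hc : HasDerivAt (cT s q) (-(2 * (s * Real.sin (q * x)) * (s * (Real.cos (q * x) * q)))) x := by
    have := (h1.pow 2).const_sub 1
    refine this.congr_deriv ?_
    simp
  have hsq := hc.sqrt hcp.ne'
  have hr := Real.sqrt_pos.2 hcp
  have := (hid.cos.const_mul (s * q)).div hsq hr.ne'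
  refine this.congr_deriv ?_
  unfold g2T dT
  rw [tan_gT]
  set r := Real.sqrt (cT s q x) with hrd
  have hr2 : cT s q x = r ^ 2 := (Real.sq_sqrt hcp.le).symm
  have hr3 : r ^ 2 = 1 - (s * Real.sin (q * x)) ^ 2 := by rw [← hr2]; rfl
  rw [hr2]
  have hsc := Real.sin_sq_add_cos_sq (q * x)
  set S := Real.sin (q * x)
  set C := Real.cos (q * x)
  field_simp
  rw [hr3]
  linear_combination (s ^ 2 * q^2 * S) * hsc

theorem g1T_sq (hs : 0 < s) (hs1 : s < 1) (x : ℝ) : g1T s q x ^ 2 = q ^ 2 - dT s q x := by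
  have hcp := cT_pos (q := q) hs hs1 x
  unfold g1T dT
  rw [div_pow, Real.sq_sqrt hcp.le]
  field_simp
  unfold cT
  linear_combination (s ^ 2 * q ^ 2) * Real.sin_sq_add_cos_sq (q * x)

theorem integral_g2T (hq : 0 < q) (hs : 0 < s) (hs1 : s < 1) :
    ∫ x in (0:ℝ)..(Real.pi / q), |g2T s q x| = 2 * s * q := by
  have hpi := Real.pi_pos
  have e : ∫ x in (0:ℝ)..(Real.pi / q), |g2T s q x| = ∫ x in (0:ℝ)..(Real.pi / q), g2T s q x := by
    apply intervalIntegral.integral_congr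
    intro x hx
    rw [Set.uIcc_of_le (by positivity)] at hx
    have h1 : 0 ≤ Real.sin (q * x) := by
      apply Real.sin_nonneg_of_nonneg_of_le_pi (mul_nonneg hq.le hx.1)
      have := hx.2
      rw [le_div_iff₀ hq] at this
      linarith
    apply abs_of_nonneg
    unfold g2T
    rw [tan_gT]
    have := dT_pos hq hs hs1 x
    positivity
  rw [e]
  have hd : ∀ x ∈ Set.uIcc 0 (Real.pi / q), HasDerivAt (fun x => -g1T s q x) (g2T s q x) x := by
    intro x _
    have := (g1T_deriv (q := q) hs hs1 x).fun_neg
    rwa [neg_neg] at this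
  rw [intervalIntegral.integral_eq_sub_of_hasDerivAt hd ((g2T_cont hs hs1).intervalIntegrable _ _)]
  have : q * (Real.pi / q) = Real.pi := by field_simp
  simp [g1T, cT, this]
  ring

theorem integral_dT (hq : 0 < q) (hs : 0 < s) (hs1 : s < 1) :
    ∫ x in (-(Real.pi / q / 2))..(Real.pi / q / 2), dT s q x ≤
      2 * q * (Real.pi - 2 * Real.arcsin s) := by
  have hpi := Real.pi_pos
  have hle : ∫ x in (-(Real.pi / q / 2))..(Real.pi / q / 2), dT s q x ≤
      ∫ x in (-(Real.pi / q / 2))..(Real.pi / q / 2), 2 * q * (q - g1T s q x) := by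
    apply intervalIntegral.integral_mono_on (by linarith [show 0 < Real.pi / q / 2 by positivity])
      ((dT_cont hs hs1).intervalIntegrable _ _)
    · have := g1T_cont (q := q) hs hs1
      exact (by fun_prop : Continuous fun x => 2 * q * (q - g1T s q x)).intervalIntegrable _ _
    · intro x hx
      have h1 := g1T_sq (q := q) hs hs1 x
      have h2 : dT s q x = q ^ 2 - g1T s q x ^ 2 := by linarith
      rw [h2]
      nlinarith [sq_nonneg (q - g1T s q x)]
  refine hle.trans (le_of_eq ?_)
  have hd : ∀ x ∈ Set.uIcc (-(Real.pi / q / 2)) (Real.pi / q / 2),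
      HasDerivAt (fun x => 2 * q * (q * x - gT s q x)) (2 * q * (q - g1T s q x)) x := by
    intro x _
    have hid : HasDerivAt (fun x => q * x) q x := by simpa using (hasDerivAt_id x).const_mul q
    exact (hid.sub (gT_deriv hs hs1 x)).const_mul (2 * q)
  rw [intervalIntegral.integral_eq_sub_of_hasDerivAt hd]
  · have h2 : q * (Real.pi / q / 2) = Real.pi / 2 := by field_simp
    simp only [gT, mul_neg, h2, Real.sin_neg, Real.sin_pi_div_two, mul_one, Real.arcsin_neg]
    ring
  · have := g1T_cont (q := q) hs hs1
    exact (by fun_prop : Continuous fun x => 2 * q * (q - g1T s q x)).intervalIntegrable _ _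

theorem sinq_add (hq : 0 < q) (x : ℝ) : Real.sin (q * (x + Real.pi / q)) = -Real.sin (q * x) := by
  have : q * (x + Real.pi / q) = q * x + Real.pi := by field_simp
  rw [this, Real.sin_add_pi]

theorem dT_periodic (hq : 0 < q) : Function.Periodic (dT s q) (Real.pi / q) := by
  intro x
  unfold dT cT
  rw [sinq_add hq]; simp

theorem g2T_periodic (hq : 0 < q) : Function.Periodic (fun x => |g2T s q x|) (Real.pi / q) := by
  intro x
  simp only [g2T]
  rw [dT_periodic hq, tan_gT, tan_gT]
  unfold cT
  rw [sinq_add hq]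
  simp [neg_div, abs_mul]

end wave

set_option maxHeartbeats 1000000 in
theorem upper_bound (T : ℝ) (hT : 0 < T) (n : ℕ) (hn : 1 ≤ n) (ε : ℝ) (hε : 0 < ε) :
    ∃ a ∈ LambdaN T n, (∫ x in (0:ℝ)..T, |a x - lam T n|) < beta1 T n + ε := by
  have hnr : (1:ℝ) ≤ n := by exact_mod_cast hn
  have hpi := Real.pi_pos
  set q : ℝ := 2 * (n + 1) * Real.pi / T with hq
  set ρ : ℝ := n / (n + 1) with hρ
  have hqp : 0 < q := by positivity
  have hρp : 0 < ρ := by positivity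
  have hρ1 : ρ < 1 := by rw [hρ, div_lt_one (by positivity)]; linarith
  have hlam : lam T n = ρ ^ 2 * q ^ 2 := by
    simp only [lam, hq, hρ]; field_simp; ring
  set K : ℝ := (Real.pi / 2) ^ 2 / Real.sin (ρ * (Real.pi / 2)) with hK
  set κ : ℝ := Real.cot (ρ * (Real.pi / 2)) with hκ
  have hsB : 0 < Real.sin (ρ * (Real.pi / 2)) :=
    Real.sin_pos_of_pos_of_lt_pi (by positivity) (by nlinarith)
  have hcB : 0 < Real.cos (ρ * (Real.pi / 2)) :=
    Real.cos_pos_of_mem_Ioo ⟨by nlinarith, by nlinarith⟩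
  have hκp : 0 < κ := by rw [hκ, Real.cot_eq_cos_div_sin]; positivity
  have hKp : 0 < K := by positivity
  have hβ : beta1 T n = (2 * (n + 1)) * (ρ * κ * (2 * q)) := by
    simp only [beta1]
    have : (n:ℝ) * Real.pi / (2 * (n + 1)) = ρ * (Real.pi / 2) := by
      simp only [hρ]; field_simp
    rw [this, ← hκ, hq, hρ]
    field_simp
    ring
  obtain ⟨s, hs, hs1, hsε⟩ : ∃ s : ℝ, 0 < s ∧ s < 1 ∧
      (2 * (n + 1)) * (ρ * K * (2 * q * (Real.pi - 2 * Real.arcsin s))) < ε := by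
    have hcont : Continuous fun s : ℝ =>
        (2 * ((n:ℝ) + 1)) * (ρ * K * (2 * q * (Real.pi - 2 * Real.arcsin s))) := by
      have := Real.continuous_arcsin
      fun_prop
    have h1 : (2 * ((n:ℝ) + 1)) * (ρ * K * (2 * q * (Real.pi - 2 * Real.arcsin 1))) < ε := by
      rw [Real.arcsin_one]
      have : Real.pi - 2 * (Real.pi / 2) = 0 := by ring
      rw [this]; simpa using hε
    have hev := (hcont.tendsto 1).eventually_lt_const h1
    have hev2 : ∀ᶠ s : ℝ in nhdsWithin 1 (Set.Iio 1), 0 < s ∧ s < 1 := by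
      filter_upwards [Ioo_mem_nhdsLT (show (0:ℝ) < 1 by norm_num)] with s hs using hs
    obtain ⟨s, h, h'⟩ := ((hev.filter_mono nhdsWithin_le_nhds).and hev2).exists
    exact ⟨s, h'.1, h'.2, h⟩
  set g := gT s q with hg
  set D := dT s q with hD
  set b : ℝ → ℝ := fun x => if Real.sin (q * x) = 0 then 0 else
    ρ * D x * (Real.tan (g x) * (Real.cos (ρ * g x) / Real.sin (ρ * g x)) - ρ) with hb
  have hDp : ∀ x, 0 < D x := dT_pos hqp hs hs1
  have hgne : ∀ x, Real.sin (q * x) ≠ 0 → g x ≠ 0 := by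
    intro x hx h0
    rw [hg, gT, Real.arcsin_eq_zero_iff] at h0
    exact hx ((mul_eq_zero.1 h0).resolve_left hs.ne')
  have hbd := fun x (hx : Real.sin (q * x) ≠ 0) =>
    tan_cot_bounds' hρp hρ1 (hgne x hx) (gT_lt hs hs1 x).2 (gT_lt hs hs1 x).1
  have hbpos : ∀ x, Real.sin (q * x) ≠ 0 → 0 < b x := by
    intro x hx
    simp only [hb, if_neg hx]
    have := (hbd x hx).1
    have h2 := hDp x
    apply mul_pos (by positivity)
    linarith
  have hb0 : ∀ x, 0 ≤ b x := by
    intro x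
    by_cases hx : Real.sin (q * x) = 0
    · simp [hb, hx]
    · exact (hbpos x hx).le
  set M : ℝ → ℝ := fun x => ρ * κ * |g2T s q x| + ρ * K * D x with hM
  have hbM : ∀ x, b x ≤ M x := by
    intro x
    have h2 := hDp x
    by_cases hx : Real.sin (q * x) = 0
    · simp only [hb, if_pos hx, hM]
      positivity
    · simp only [hb, if_neg hx, hM, g2T]
      have h3 := (hbd x hx).2
      rw [abs_mul, abs_of_pos h2]
      calc _ ≤ ρ * D x * (κ * |Real.tan (g x)| + K) := by
            apply mul_le_mul_of_nonneg_left _ (by positivity)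
            linarith
        _ = _ := by ring
  have hMc : Continuous M := by
    have h1 := g2T_cont (q := q) hs hs1
    have h2 : Continuous D := dT_cont hs hs1
    simp only [hM]; fun_prop
  have hgc : Continuous g := gT_cont
  have hbm : Measurable b := by
    have h1 := hgc.measurable
    have h2 : Measurable D := (dT_cont hs hs1).measurable
    have h3 : Measurable fun x => Real.tan (g x) := by
      have : (fun x => Real.tan (g x)) = fun x => Real.sin (g x) / Real.cos (g x) := by
        funext x; rw [Real.tan_eq_sin_div_cos]
      rw [this]; fun_prop
    refine Measurable.ite ?_ measurable_const (by fun_prop)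
    exact (isClosed_eq (by fun_prop) continuous_const).measurableSet
  have hbi : ∀ c d, IntervalIntegrable b volume c d := by
    intro c d
    refine (hMc.intervalIntegrable c d).mono_fun hbm.aestronglyMeasurable ?_
    filter_upwards with x
    rw [Real.norm_eq_abs, Real.norm_eq_abs, abs_of_nonneg (hb0 x),
      abs_of_nonneg ((hb0 x).trans (hbM x))]
    exact hbM x
  have hTq : T = (2 * (n + 1) : ℕ) • (Real.pi / q) := by
    rw [nsmul_eq_mul, hq]; push_cast; field_simp
  have hqT : q * T = 2 * (n + 1) * Real.pi := by rw [hq]; field_simp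
  have hsinT : ∀ x, Real.sin (q * (x + T)) = Real.sin (q * x) := by
    intro x
    have : q * (x + T) = q * x + (n + 1 : ℕ) * (2 * Real.pi) := by
      rw [mul_add, hqT]; push_cast; ring
    rw [this, Real.sin_add_nat_mul_two_pi]
  have hcosT : Real.cos (q * T) = 1 := by
    have : q * T = (n + 1 : ℕ) * (2 * Real.pi) := by
      rw [hqT]; push_cast; ring
    rw [this, Real.cos_nat_mul_two_pi]
  set u : ℝ → ℝ := fun x => Real.sin (ρ * g x) with hu
  set v : ℝ → ℝ := fun x => Real.cos (ρ * g x) * (ρ * g1T s q x) with hv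
  have hgd : ∀ x, HasDerivAt g (g1T s q x) x := gT_deriv hs hs1
  have hud : ∀ x, HasDerivAt u (v x) x := fun x => ((hgd x).const_mul ρ).sin
  have hvd : ∀ x, HasDerivAt v (-((ρ ^ 2 * q ^ 2 + b x) * u x)) x := by
    intro x
    have h1 := ((hgd x).const_mul ρ).cos.mul ((g1T_deriv (q := q) hs hs1 x).const_mul ρ)
    refine h1.congr_deriv ?_
    have h2 := g1T_sq (q := q) hs hs1 x
    simp only [hb, hu]
    by_cases hx : Real.sin (q * x) = 0
    · rw [if_pos hx]
      have h0 : g x = 0 := by simp [hg, gT, hx]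
      simp only [g2T]
      rw [← hg, h0]; simp
    · rw [if_neg hx]
      have hne : Real.sin (ρ * g x) ≠ 0 := by
        have h3 := hgne x hx
        have h4 := gT_lt (q := q) hs hs1 x
        intro h0
        rw [Real.sin_eq_zero_iff_of_lt_of_lt (by nlinarith) (by nlinarith)] at h0
        exact h3 ((mul_eq_zero.1 h0).resolve_left hρp.ne')
      simp only [g2T]
      rw [← hg, ← hD]
      rw [← hD] at h2
      field_simp
      linear_combination (-ρ * Real.sin (ρ * g x)) * h2
  have hai : ∀ c d, IntervalIntegrable (fun x => ρ ^ 2 * q ^ 2 + b x) volume c d := fun c d =>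
    (continuous_const.intervalIntegrable _ _).add (hbi c d)
  refine ⟨fun x => ρ ^ 2 * q ^ 2 + b x, ⟨⟨?_, ?_, ?_⟩, ⟨?_, ?_⟩, u, v, ⟨⟨?_, ?_⟩, ?_, ?_⟩, ?_⟩, ?_⟩
  · exact measurable_const.add hbm
  · intro x
    simp only [hb, hg, hD, gT, dT, cT]
    rw [hsinT]
  · rw [← intervalIntegrable_iff_integrableOn_Icc_of_le hT.le]
    exact hai _ _
  · filter_upwards with x
    rw [hlam]; linarith [hb0 x]
  · have hsub : Set.Ioo 0 (Real.pi / q) ⊆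
        {x | x ∈ Set.Icc 0 T ∧ (fun _ => lam T n) x < ρ ^ 2 * q ^ 2 + b x} := by
      intro x hx
      have h1 : q * x < Real.pi := by
        have := hx.2
        rw [lt_div_iff₀ hqp] at this; linarith
      have h2 : 0 < Real.sin (q * x) := Real.sin_pos_of_pos_of_lt_pi (mul_pos hqp hx.1) h1
      refine ⟨⟨hx.1.le, ?_⟩, ?_⟩
      · have : q * x ≤ q * T := by rw [hqT]; nlinarith
        exact le_of_mul_le_mul_left this hqp
      · simp only [hlam]
        linarith [hbpos x h2.ne']
    refine lt_of_lt_of_le ?_ (measure_mono hsub)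
    rw [Real.volume_Ioo, ENNReal.ofReal_pos, sub_zero]
    positivity
  · intro x _; exact (hud x).hasDerivWithinAt
  · intro x _
    have huc : Continuous u := by simp only [hu]; fun_prop
    have hi : IntervalIntegrable (fun t => -((ρ ^ 2 * q ^ 2 + b t) * u t)) volume 0 x :=
      ((hai 0 x).mul_continuousOn huc.continuousOn).neg
    have := intervalIntegral.integral_eq_sub_of_hasDerivAt (fun t _ => hvd t) hi
    rw [intervalIntegral.integral_neg] at this
    linarith
  · have := hsinT 0
    simp only [zero_add] at this
    simp only [hu, hg, gT]
    rw [this]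
  · have := hsinT 0
    simp only [zero_add] at this
    simp only [hv, hg, gT, g1T, cT]
    rw [this, hcosT]; simp
  · refine ⟨Real.pi / q / 2, ⟨by positivity, ?_⟩, ?_⟩
    · have : q * (Real.pi / q / 2) ≤ q * T := by
        rw [hqT]
        have : q * (Real.pi / q / 2) = Real.pi / 2 := by field_simp
        rw [this]; nlinarith
      exact le_of_mul_le_mul_left this hqp
    · have h2 : q * (Real.pi / q / 2) = Real.pi / 2 := by field_simp
      have h3 : 0 < g (Real.pi / q / 2) := by
        simp only [hg, gT]; rw [h2, Real.sin_pi_div_two, mul_one]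
        exact Real.arcsin_pos.2 hs
      have h4 := (gT_lt (q := q) hs hs1 (Real.pi / q / 2)).2
      rw [← hg] at h4
      exact (Real.sin_pos_of_pos_of_lt_pi (by positivity) (by nlinarith)).ne'
  · have e1 : ∫ x in (0:ℝ)..T, |ρ ^ 2 * q ^ 2 + b x - lam T n| = ∫ x in (0:ℝ)..T, b x := by
      apply intervalIntegral.integral_congr
      intro x _
      simp only
      rw [hlam, add_sub_cancel_left, abs_of_nonneg (hb0 x)]
    rw [e1]
    have hg2c : Continuous fun x => |g2T s q x| := (g2T_cont hs hs1).abs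
    have hDc : Continuous D := dT_cont hs hs1
    have e2 : ∫ x in (0:ℝ)..T, b x ≤ ∫ x in (0:ℝ)..T, M x :=
      intervalIntegral.integral_mono_on hT.le (hbi _ _) (hMc.intervalIntegrable _ _)
        fun x _ => hbM x
    have e3 : ∫ x in (0:ℝ)..T, M x = ρ * κ * (∫ x in (0:ℝ)..T, |g2T s q x|) +
        ρ * K * ∫ x in (0:ℝ)..T, D x := by
      simp only [hM]
      rw [intervalIntegral.integral_add ((hg2c.const_mul _).intervalIntegrable _ _)
        ((hDc.const_mul _).intervalIntegrable _ _), intervalIntegral.integral_const_mul,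
        intervalIntegral.integral_const_mul]
    have e4 : ∫ x in (0:ℝ)..T, |g2T s q x| = (2 * (n + 1)) * (2 * s * q) := by
      have := (g2T_periodic (s := s) hqp).intervalIntegral_add_zsmul_eq (2 * (n + 1) : ℕ) 0
        (fun _ _ => hg2c.intervalIntegrable _ _)
      rw [zero_add, zero_add, natCast_zsmul, natCast_zsmul, ← hTq, integral_g2T hqp hs hs1] at this
      rw [this, nsmul_eq_mul]; push_cast; ring
    have e5 : ∫ x in (0:ℝ)..T, D x ≤ (2 * (n + 1)) * (2 * q * (Real.pi - 2 * Real.arcsin s)) := by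
      have := (dT_periodic (s := s) hqp).intervalIntegral_add_zsmul_eq (2 * (n + 1) : ℕ) 0
        (fun _ _ => hDc.intervalIntegrable _ _)
      rw [(dT_periodic (s := s) hqp).intervalIntegral_add_eq 0 (-(Real.pi / q / 2)),
        show -(Real.pi / q / 2) + Real.pi / q = Real.pi / q / 2 by ring,
        zero_add, natCast_zsmul, natCast_zsmul, ← hTq] at this
      rw [hD, this, nsmul_eq_mul]; push_cast
      exact mul_le_mul_of_nonneg_left (integral_dT hqp hs hs1) (by positivity)
    have e6 : ρ * K * ∫ x in (0:ℝ)..T, D x ≤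
        ρ * K * ((2 * (n + 1)) * (2 * q * (Real.pi - 2 * Real.arcsin s))) :=
      mul_le_mul_of_nonneg_left e5 (by positivity)
    have e7 : ρ * κ * ((2 * (n + 1)) * (2 * s * q)) ≤ (2 * (n + 1)) * (ρ * κ * (2 * q)) := by
      have : 0 ≤ (2 * ((n:ℝ) + 1)) * (ρ * κ * (2 * q)) := by positivity
      calc ρ * κ * ((2 * ((n:ℝ) + 1)) * (2 * s * q))
          = (2 * ((n:ℝ) + 1)) * (ρ * κ * (2 * q)) * s := by ring
        _ ≤ (2 * ((n:ℝ) + 1)) * (ρ * κ * (2 * q)) * 1 := mul_le_mul_of_nonneg_left hs1.le this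
        _ = _ := mul_one _
    rw [hβ]
    calc _ ≤ _ := e2
      _ = _ := e3
      _ ≤ (2 * (n + 1)) * (ρ * κ * (2 * q)) +
        ρ * K * ((2 * (n + 1)) * (2 * q * (Real.pi - 2 * Real.arcsin s))) := by
          rw [e4]; linarith
      _ < _ := by linarith

theorem stmt5 (T : ℝ) (hT : 0 < T) (n : ℕ) (hn : 1 ≤ n) :
    (∀ ε > (0:ℝ), ∃ a ∈ LambdaN T n,
        (∫ x in (0:ℝ)..T, |a x - lam T n|) < beta1 T n + ε) ∧
    sInf ((fun a : ℝ → ℝ => ∫ x in (0:ℝ)..T, |a x - lam T n|) '' LambdaN T n) = beta1 T n := by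
  have hU := upper_bound T hT n hn
  refine ⟨hU, ?_⟩
  apply csInf_eq_of_forall_ge_of_forall_gt_exists_lt
  · obtain ⟨a, ha, _⟩ := hU 1 one_pos
    exact ⟨_, a, ha, rfl⟩
  · rintro _ ⟨a, ha, rfl⟩
    exact lower_bound T hT n hn a ha
  · intro w hw
    obtain ⟨a, ha, h⟩ := hU (w - beta1 T n) (by linarith)
    exact ⟨_, ⟨a, ha, rfl⟩, by linarith⟩
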